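/- arXiv:2403.01327 — 2 statements merged into one kernel-verified Lean document; each statement's English description precedes it below -/
import Mathlib

section
/- For every ℓ ∈ ℕ⁺ and every t ∈ [−1, 1], the derivative of g_ℓ satisfies g_ℓ'(t) ≤ (π^ℓ / 2^{(ℓ+1)/2}) · (2 − 2 g_ℓ(|t|))^{1 − 2^{−ℓ}}. -/
/-!
Write `u_k = 1 - |g_k(t)|`. By the chain rule `g_ℓ'(t)` is a product of `ℓ` factors
`(π/2) cos(π g_{k-1}(t)/2)`, and each cosine is at most `√(2 u_k)` because
`cos² = 1 - g_k(t)² ≤ 2 (1 - |g_k(t)|)`. Moreover `u_{k-1}² ≤ u_k`: indeed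
`1 - sin(πs/2) = 2 sin²(π(1-s)/4)`, and `sin(πx/4) ≥ x/√2` on `[0,1]` by concavity.
By induction these two facts give
`0 ≤ g_ℓ'(t) ≤ (π/√2)^ℓ u_ℓ^(1 - 2^{-ℓ})` (`exists_deriv_iterate_bound`), which is stronger than
the claim by the factor `2^(1/2 - 2^{-ℓ}) ≥ 1`.
-/

/-- `g(t) = sin(πt/2)`. -/
noncomputable def g (t : ℝ) : ℝ := Real.sin (Real.pi * t / 2)

lemma g_abs_eq {s : ℝ} (hs : |s| ≤ 1) : g |s| = |g s| := by
  have hpi := Real.pi_pos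
  have h0 : 0 ≤ g |s| :=
    Real.sin_nonneg_of_nonneg_of_le_pi (by positivity) (by nlinarith [abs_nonneg s])
  rcases abs_cases s with ⟨h, _⟩ | ⟨h, _⟩
  · rw [h] at h0 ⊢
    exact (abs_of_nonneg h0).symm
  · have hneg : g (-s) = -g s := by
      unfold g
      rw [← Real.sin_neg]
      congr 1
      ring
    rw [h, hneg] at h0
    rw [h, hneg, abs_of_nonpos (by linarith)]

lemma abs_g_le_one (s : ℝ) : |g s| ≤ 1 := Real.abs_sin_le_one _

lemma cos_le_sqrt_one_sub_abs_g (s : ℝ) :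
    Real.cos (Real.pi * s / 2) ≤ Real.sqrt 2 * Real.sqrt (1 - |g s|) := by
  rw [← Real.sqrt_mul (by norm_num)]
  apply Real.le_sqrt_of_sq_le
  have h1 := Real.sin_sq_add_cos_sq (Real.pi * s / 2)
  have h2 : |g s| ^ 2 = Real.sin (Real.pi * s / 2) ^ 2 := sq_abs _
  nlinarith [sq_nonneg (1 - |g s|)]

lemma one_sub_abs_sq_le {s : ℝ} (hs : |s| ≤ 1) : (1 - |s|) ^ 2 ≤ 1 - |g s| := by
  rw [← g_abs_eq hs]
  have hpi := Real.pi_pos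
  set x := 1 - |s| with hx
  have hx0 : 0 ≤ x := by linarith
  have hx1 : x ≤ 1 := by linarith [abs_nonneg s]
  have hgs : g |s| = 1 - 2 * Real.sin (Real.pi * x / 4) ^ 2 := by
    have harg : Real.pi * |s| / 2 = Real.pi / 2 - 2 * (Real.pi * x / 4) := by
      rw [hx]; ring
    unfold g
    rw [harg, Real.sin_pi_div_two_sub, Real.cos_two_mul, Real.cos_sq']
    ring
  -- the chord of `sin` between `0` and `π/4`
  have hchord : x * (Real.sqrt 2 / 2) ≤ Real.sin (Real.pi * x / 4) := by
    have h := strictConcaveOn_sin_Icc.concaveOn.2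
      (show (0 : ℝ) ∈ Set.Icc 0 Real.pi from ⟨le_refl _, hpi.le⟩)
      (show Real.pi / 4 ∈ Set.Icc 0 Real.pi from ⟨by positivity, by linarith⟩)
      (show 0 ≤ 1 - x by linarith) hx0 (by ring)
    simp only [smul_eq_mul, Real.sin_zero, Real.sin_pi_div_four, mul_zero, zero_add] at h
    rwa [show Real.pi * x / 4 = x * (Real.pi / 4) by ring]
  have hsq := pow_le_pow_left₀ (by positivity) hchord 2
  have h2 : Real.sqrt 2 ^ 2 = 2 := Real.sq_sqrt (by norm_num)
  rw [mul_pow, div_pow, h2] at hsq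
  rw [hgs]
  linarith

lemma hasDerivAt_g (s : ℝ) : HasDerivAt g (Real.cos (Real.pi * s / 2) * (Real.pi / 2)) s := by
  have h : HasDerivAt (fun t : ℝ => Real.pi * t / 2) (Real.pi / 2) s := by
    simpa using ((hasDerivAt_id s).const_mul Real.pi).div_const 2
  exact h.sin

/-- The inductive form of the bound, starting from `n = 0`; the constant `(π/√2)^n` is
sharper than the one in the final statement. -/
lemma exists_deriv_iterate_bound {t : ℝ} (ht : |t| ≤ 1) (n : ℕ) :
    |g^[n] t| ≤ 1 ∧ g^[n] |t| = |g^[n] t| ∧ ∃ D : ℝ, 0 ≤ D ∧ HasDerivAt (g^[n]) D t ∧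
      D ≤ (Real.pi / Real.sqrt 2) ^ n * (1 - |g^[n] t|) ^ (1 - (1 / 2 : ℝ) ^ n) := by
  have hpi := Real.pi_pos
  induction n with
  | zero => exact ⟨ht, rfl, 1, zero_le_one, hasDerivAt_id t, by simp⟩
  | succ n ih =>
    obtain ⟨h1, h2, D, hD0, hD, hDle⟩ := ih
    rw [Function.iterate_succ', Function.comp_apply, Function.comp_apply, h2, g_abs_eq h1]
    refine ⟨abs_g_le_one _, rfl, _, ?_, (hasDerivAt_g _).comp t hD, ?_⟩
    · have habs := abs_le.1 h1
      have : 0 ≤ Real.cos (Real.pi * g^[n] t / 2) :=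
        Real.cos_nonneg_of_mem_Icc ⟨by nlinarith, by nlinarith⟩
      positivity
    · set s := g^[n] t
      have hu0 : 0 ≤ 1 - |s| := by linarith
      have hv0 : 0 ≤ 1 - |g s| := by linarith [abs_g_le_one s]
      have he : (0 : ℝ) ≤ 1 - (1 / 2) ^ n := by
        linarith [pow_le_one₀ (n := n) (show (0 : ℝ) ≤ 1 / 2 by norm_num) (by norm_num)]
      have huv : 1 - |s| ≤ (1 - |g s|) ^ (1 / 2 : ℝ) := by
        rw [← Real.sqrt_eq_rpow]
        exact Real.le_sqrt_of_sq_le (one_sub_abs_sq_le h1)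
      have hpow : (1 - |s|) ^ (1 - (1 / 2 : ℝ) ^ n)
          ≤ (1 - |g s|) ^ (1 / 2 * (1 - (1 / 2 : ℝ) ^ n)) := by
        rw [Real.rpow_mul hv0]
        exact Real.rpow_le_rpow hu0 huv he
      have hexp : (1 - |g s|) ^ (1 - (1 / 2 : ℝ) ^ (n + 1))
          = Real.sqrt (1 - |g s|) * (1 - |g s|) ^ (1 / 2 * (1 - (1 / 2 : ℝ) ^ n)) := by
        rw [Real.sqrt_eq_rpow, ← Real.rpow_add_of_nonneg hv0 (by norm_num) (by positivity)]
        congr 1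
        ring
      have hconst : Real.sqrt 2 * (Real.pi / 2) = Real.pi / Real.sqrt 2 := by
        have h2 : Real.sqrt 2 * Real.sqrt 2 = 2 := Real.mul_self_sqrt (by norm_num)
        rw [eq_div_iff (by positivity)]
        linear_combination (Real.pi / 2) * h2
      calc Real.cos (Real.pi * s / 2) * (Real.pi / 2) * D
          ≤ Real.sqrt 2 * Real.sqrt (1 - |g s|) * (Real.pi / 2) *
            ((Real.pi / Real.sqrt 2) ^ n *
              (1 - |g s|) ^ (1 / 2 * (1 - (1 / 2 : ℝ) ^ n))) := by
            gcongr
            · exact cos_le_sqrt_one_sub_abs_g s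
            · exact hDle.trans (by gcongr)
        _ = _ := by
            rw [hexp, pow_succ, ← hconst]
            ring

/-- For every `ℓ ∈ ℕ⁺` and every `t ∈ [−1,1]`,
`g_ℓ'(t) ≤ (π^ℓ / 2^{(ℓ+1)/2}) · (2 − 2 g_ℓ(|t|))^{1 − 2^{−ℓ}}`. -/
theorem deriv_iterate_g_le (ℓ : ℕ) (hℓ : 1 ≤ ℓ) (t : ℝ)
    (ht : t ∈ Set.Icc (-1 : ℝ) 1) :
    deriv (g^[ℓ]) t ≤
      Real.pi ^ ℓ / (2 : ℝ) ^ (((ℓ : ℝ) + 1) / 2) *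
        (2 - 2 * g^[ℓ] |t|) ^ (1 - (2 : ℝ) ^ (-(ℓ : ℝ))) := by
  have hpi := Real.pi_pos
  obtain ⟨h1, h2, D, -, hD, hDle⟩ := exists_deriv_iterate_bound (abs_le.2 ht) ℓ
  have hv0 : 0 ≤ 1 - |g^[ℓ] t| := by linarith
  have hp : (2 : ℝ) ^ (-(ℓ : ℝ)) = (1 / 2) ^ ℓ := by
    rw [Real.rpow_neg (by norm_num), Real.rpow_natCast, one_div, inv_pow]
  have hhalf : (1 / 2 : ℝ) ^ ℓ ≤ 1 / 2 := by
    simpa using pow_le_pow_of_le_one (show (0 : ℝ) ≤ 1 / 2 by norm_num) (by norm_num) hℓ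
  rw [hD.deriv, h2, hp, show 2 - 2 * |g^[ℓ] t| = 2 * (1 - |g^[ℓ] t|) by ring,
    Real.mul_rpow (by norm_num) hv0, ← mul_assoc]
  refine hDle.trans (mul_le_mul_of_nonneg_right ?_ (Real.rpow_nonneg hv0 _))
  have hs : Real.sqrt 2 ^ ℓ = (2 : ℝ) ^ ((ℓ : ℝ) / 2) := by
    rw [Real.sqrt_eq_rpow, ← Real.rpow_natCast, ← Real.rpow_mul (by norm_num)]
    congr 1
    ring
  rw [div_pow, hs, div_mul_eq_mul_div, div_le_div_iff₀ (by positivity) (by positivity), mul_assoc,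
    ← Real.rpow_add (by norm_num)]
  gcongr
  · norm_num
  · linarith
end

section
/- Let d ≥ 1 and let S be a finite subset of the unit sphere S^{d-1} ⊂ ℝ^d with |S| = n ≥ 2. Let δ > 0 and let D be a positive integer with D ≥ 6 log n / δ². Let μ be the D-fold product of the standard Gaussian measure on ℝ^d, so a sample from μ is a tuple (Z₁, …, Z_D) of independent standard Gaussian vectors in ℝ^d. Then with μ-probability at least 1 − 1/n, the following event holds: for all x, y ∈ S, |D^{−1} Σ_{i=1}^{D} sign(⟨x, Z_i⟩)·sign(⟨y, Z_i⟩) − (2/π)·arcsin(⟨x, y⟩)| ≤ δ. -/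
/-!
For a single pair `x, y` of unit vectors, the summands `sign⟨x,Zᵢ⟩ · sign⟨y,Zᵢ⟩` are independent,
take values in `[-1, 1]`, and have mean `(2/π) arcsin⟨x,y⟩` (Grothendieck's identity,
`integral_sgn_inner_mul_sgn_inner`). Hoeffding's inequality (`measureReal_sign_sum_far_le`) bounds
the probability of a deviation larger than `δ` by `2 exp(-D δ² / 2) ≤ 2 n⁻³`. Pairs with `x = y`
never deviate, since both sides equal `1`, and the event is symmetric in `x` and `y`, so a union
bound over the `n (n - 1) / 2` unordered pairs gives a failure probability of at most
`(n - 1) / n² ≤ 1 / n`.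

Grothendieck's identity is reduced to the plane: the joint law of `(⟨x,Z⟩, ⟨y,Z⟩)` is determined by
the norms and the inner product of `x` and `y` (`map_pair_gaussian_eq`, by characteristic
functions), so `x, y` may be replaced by `(1, 0)` and `(cos θ, sin θ)` with `θ = arccos⟨x,y⟩`. In
polar coordinates the radial part integrates out (`integral_prod_gaussian_of_homogeneous`), and the
angular integral of `sign(cos φ) · sign(cos(φ - θ))` is `2π - 4θ`
(`integral_sgn_cos_mul_sgn_cos`).
-/

open MeasureTheory ProbabilityTheory RealInnerProductSpace

/-- `sign(t) = 1` if `t ≥ 0` and `−1` if `t < 0`. -/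
noncomputable def sgn (t : ℝ) : ℝ := if 0 ≤ t then 1 else -1

lemma measurable_sgn : Measurable sgn :=
  Measurable.ite measurableSet_Ici measurable_const measurable_const

lemma sgn_of_nonneg {t : ℝ} (h : 0 ≤ t) : sgn t = 1 := if_pos h

lemma sgn_of_neg {t : ℝ} (h : t < 0) : sgn t = -1 := if_neg h.not_ge

lemma sgn_mul_of_pos {r : ℝ} (hr : 0 < r) (t : ℝ) : sgn (r * t) = sgn t := by
  simp only [sgn, mul_nonneg_iff_of_pos_left hr]

lemma sgn_mul_self (t : ℝ) : sgn t * sgn t = 1 := by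
  unfold sgn; split_ifs <;> norm_num

lemma sgn_mul_sgn_mem_Icc (s t : ℝ) : sgn s * sgn t ∈ Set.Icc (-1 : ℝ) 1 := by
  unfold sgn; split_ifs <;> norm_num

/-- Characteristic function of the standard Gaussian vector, evaluated at `c`. -/
lemma charFun_pi_gaussian {ι : Type*} [Fintype ι] (c : ι → ℝ) :
    ∫ z, Complex.exp ((∑ j, c j * z j : ℝ) * Complex.I)
        ∂(Measure.pi fun _ : ι => gaussianReal 0 1) =
      Complex.exp (-(∑ j, c j ^ 2 : ℝ) / 2) := by
  have h (z : ι → ℝ) : Complex.exp ((∑ j, c j * z j : ℝ) * Complex.I) =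
      ∏ j, Complex.exp (c j * z j * Complex.I) := by
    rw [← Complex.exp_sum]
    push_cast
    rw [Finset.sum_mul]
  simp_rw [h]
  rw [integral_fintype_prod_eq_prod (μ := fun _ : ι => gaussianReal 0 1)
    (f := fun j (x : ℝ) => Complex.exp (c j * x * Complex.I))]
  have h2 (j : ι) : ∫ x : ℝ, Complex.exp (c j * x * Complex.I) ∂(gaussianReal 0 1) =
      Complex.exp (-(c j : ℂ) ^ 2 / 2) := by
    rw [← charFun_apply_real, charFun_gaussianReal]
    congr 1
    push_cast
    ring
  simp_rw [h2]
  rw [← Complex.exp_sum]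
  congr 1
  push_cast
  rw [← Finset.sum_div, Finset.sum_neg_distrib]

/-- The joint law of two linear functionals of a standard Gaussian vector depends only on their
norms and on their inner product. The ambient dimensions on the two sides may differ, which is what
reduces the computation to the plane, degenerate pairs `y = ± x` included. -/
lemma map_pair_gaussian_eq {ι κ : Type} [Fintype ι] [Fintype κ] (x y : ι → ℝ) (u v : κ → ℝ)
    (hxx : ∑ j, x j ^ 2 = ∑ j, u j ^ 2) (hyy : ∑ j, y j ^ 2 = ∑ j, v j ^ 2)
    (hxy : ∑ j, x j * y j = ∑ j, u j * v j) :
    (Measure.pi fun _ : ι => gaussianReal 0 1).map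
        (fun z => (∑ j, x j * z j, ∑ j, y j * z j)) =
      (Measure.pi fun _ : κ => gaussianReal 0 1).map
        (fun z => (∑ j, u j * z j, ∑ j, v j * z j)) := by
  have hm1 : Measurable fun z : ι → ℝ => (∑ j, x j * z j, ∑ j, y j * z j) := by fun_prop
  have hm2 : Measurable fun z : κ → ℝ => (∑ j, u j * z j, ∑ j, v j * z j) := by fun_prop
  have := Measure.isProbabilityMeasure_map (μ := Measure.pi fun _ : ι => gaussianReal 0 1)
    hm1.aemeasurable
  have := Measure.isProbabilityMeasure_map (μ := Measure.pi fun _ : κ => gaussianReal 0 1)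
    hm2.aemeasurable
  apply Measure.ext_of_charFunDual
  ext L
  set a := L (1, 0) with ha
  set b := L (0, 1) with hb
  have hL (p q : ℝ) : L (p, q) = a * p + b * q := by
    have : (p, q) = p • ((1 : ℝ), (0 : ℝ)) + q • ((0 : ℝ), (1 : ℝ)) := by simp
    rw [this, map_add, map_smul, map_smul, ← ha, ← hb, smul_eq_mul, smul_eq_mul]
    ring
  have key {τ : Type} [Fintype τ] (s t : τ → ℝ) (z : τ → ℝ) :
      a * ∑ j, s j * z j + b * ∑ j, t j * z j = ∑ j, (a * s j + b * t j) * z j := by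
    rw [Finset.mul_sum, Finset.mul_sum, ← Finset.sum_add_distrib]
    exact Finset.sum_congr rfl fun j _ => by ring
  have key2 {τ : Type} [Fintype τ] (s t : τ → ℝ) :
      ∑ j, (a * s j + b * t j) ^ 2 =
        a ^ 2 * ∑ j, s j ^ 2 + 2 * a * b * ∑ j, s j * t j + b ^ 2 * ∑ j, t j ^ 2 := by
    simp only [Finset.mul_sum, ← Finset.sum_add_distrib]
    exact Finset.sum_congr rfl fun j _ => by ring
  rw [charFunDual_apply, charFunDual_apply, integral_map hm1.aemeasurable (by fun_prop),
    integral_map hm2.aemeasurable (by fun_prop)]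
  simp_rw [hL]
  simp_rw [key]
  rw [charFun_pi_gaussian, charFun_pi_gaussian, key2, key2, hxx, hyy, hxy]

/-- Two half-circles whose axes form an angle `θ` disagree on two arcs of length `θ` each. -/
lemma integral_sgn_cos_mul_sgn_cos {θ : ℝ} (h0 : 0 ≤ θ) (hπ : θ ≤ Real.pi) :
    ∫ φ in Set.Ioo (-Real.pi) Real.pi, sgn (Real.cos φ) * sgn (Real.cos (φ - θ)) =
      2 * Real.pi - 4 * θ := by
  have hpi := Real.pi_pos
  set f : ℝ → ℝ := fun φ => sgn (Real.cos φ) * sgn (Real.cos (φ - θ)) with hf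
  have hper : Function.Periodic f (2 * Real.pi) := by
    intro φ
    simp only [hf, Real.cos_add_two_pi, add_sub_right_comm]
  have hmeas : Measurable f :=
    (measurable_sgn.comp Real.measurable_cos).mul
      (measurable_sgn.comp (Real.measurable_cos.comp (measurable_id.sub_const θ)))
  have hint (a b : ℝ) : IntervalIntegrable f volume a b := by
    rw [intervalIntegrable_iff]
    refine Measure.integrableOn_of_bounded (M := 1) (by simp)
      hmeas.aestronglyMeasurable (ae_of_all _ fun φ => ?_)
    exact abs_le.2 (sgn_mul_sgn_mem_Icc _ _)
  have hconst (a b c : ℝ) (hab : a ≤ b) (h : ∀ φ ∈ Set.Ioo a b, f φ = c) :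
      ∫ φ in a..b, f φ = (b - a) * c := by
    rw [intervalIntegral.integral_of_le hab, integral_Ioc_eq_integral_Ioo,
      setIntegral_congr_fun measurableSet_Ioo h]
    simp [hab]
  have pos {φ : ℝ} (h1 : -(Real.pi / 2) ≤ φ) (h2 : φ ≤ Real.pi / 2) : sgn (Real.cos φ) = 1 :=
    sgn_of_nonneg (Real.cos_nonneg_of_neg_pi_div_two_le_of_le h1 h2)
  have neg {φ : ℝ} (h1 : Real.pi / 2 < φ) (h2 : φ < Real.pi + Real.pi / 2) :
      sgn (Real.cos φ) = -1 := sgn_of_neg (Real.cos_neg_of_pi_div_two_lt_of_lt h1 h2)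
  have neg' {φ : ℝ} (h1 : -(Real.pi + Real.pi / 2) < φ) (h2 : φ < -(Real.pi / 2)) :
      sgn (Real.cos φ) = -1 := by
    rw [← Real.cos_neg]; exact neg (by linarith) (by linarith)
  -- Over one period starting at `-π/2` the product has sign `-, +, -, +` on four arcs.
  have i1 : ∫ φ in (-(Real.pi / 2))..(θ - Real.pi / 2), f φ = -θ := by
    rw [hconst _ _ (-1) (by linarith)]
    · ring
    rintro φ ⟨h1, h2⟩
    simp only [hf]
    rw [pos (by linarith) (by linarith), neg' (by linarith) (by linarith)]; norm_num
  have i2 : ∫ φ in (θ - Real.pi / 2)..(Real.pi / 2), f φ = Real.pi - θ := by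
    rw [hconst _ _ 1 (by linarith)]
    · ring
    rintro φ ⟨h1, h2⟩
    simp only [hf]
    rw [pos (by linarith) (by linarith), pos (by linarith) (by linarith)]; norm_num
  have i3 : ∫ φ in (Real.pi / 2)..(θ + Real.pi / 2), f φ = -θ := by
    rw [hconst _ _ (-1) (by linarith)]
    · ring
    rintro φ ⟨h1, h2⟩
    simp only [hf]
    rw [neg (by linarith) (by linarith), pos (by linarith) (by linarith)]; norm_num
  have i4 : ∫ φ in (θ + Real.pi / 2)..(-(Real.pi / 2) + 2 * Real.pi), f φ = Real.pi - θ := by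
    rw [hconst _ _ 1 (by linarith)]
    · ring
    rintro φ ⟨h1, h2⟩
    simp only [hf]
    rw [neg (by linarith) (by linarith), neg (by linarith) (by linarith)]; norm_num
  rw [← integral_Ioc_eq_integral_Ioo, ← intervalIntegral.integral_of_le (by linarith)]
  have h := hper.intervalIntegral_add_eq (-Real.pi) (-(Real.pi / 2))
  rw [show -Real.pi + 2 * Real.pi = Real.pi by ring] at h
  rw [h, ← intervalIntegral.integral_add_adjacent_intervals (hint _ (θ + Real.pi / 2)) (hint _ _),
    ← intervalIntegral.integral_add_adjacent_intervals (hint _ (Real.pi / 2)) (hint _ _),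
    ← intervalIntegral.integral_add_adjacent_intervals (hint _ (θ - Real.pi / 2)) (hint _ _),
    i1, i2, i3, i4]
  ring

lemma integral_mul_exp_neg_sq_div_two :
    ∫ r in Set.Ioi (0 : ℝ), r * Real.exp (-r ^ 2 / 2) = 1 := by
  have h := integral_rpow_mul_exp_neg_mul_rpow (p := 2) (q := 1) (b := 1 / 2)
    (by norm_num) (by norm_num) (by norm_num)
  norm_num [Real.rpow_neg_one] at h
  rw [← h]
  refine setIntegral_congr_fun measurableSet_Ioi fun r _ => ?_
  ring_nf

/-- The Gaussian mean in the plane of a function constant on rays from the origin is its average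
over the unit circle. No integrability is needed: the polar-coordinates formula and the product
formula for integrals hold with the junk value as well. -/
lemma integral_prod_gaussian_of_homogeneous (F : ℝ × ℝ → ℝ)
    (hF : ∀ r : ℝ, 0 < r → ∀ φ, F (r * Real.cos φ, r * Real.sin φ) = F (Real.cos φ, Real.sin φ)) :
    ∫ p, F p ∂((gaussianReal 0 1).prod (gaussianReal 0 1)) =
      (2 * Real.pi)⁻¹ * ∫ φ in Set.Ioo (-Real.pi) Real.pi, F (Real.cos φ, Real.sin φ) := by
  have hdens : ((gaussianReal 0 1).prod (gaussianReal 0 1)) =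
      (volume : Measure (ℝ × ℝ)).withDensity
        fun p => ENNReal.ofReal ((2 * Real.pi)⁻¹ * Real.exp (-(p.1 ^ 2 + p.2 ^ 2) / 2)) := by
    rw [gaussianReal_of_var_ne_zero _ one_ne_zero, prod_withDensity (measurable_gaussianPDF _ _)
      (measurable_gaussianPDF _ _), ← Measure.volume_eq_prod]
    congr 1
    ext p
    rw [gaussianPDF, gaussianPDF, ← ENNReal.ofReal_mul (gaussianPDFReal_nonneg _ _ _)]
    congr 1
    simp only [gaussianPDFReal, NNReal.coe_one, mul_one, sub_zero]
    rw [mul_mul_mul_comm, ← mul_inv, Real.mul_self_sqrt (by positivity), ← Real.exp_add]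
    congr 2
    ring
  rw [hdens, integral_withDensity_eq_integral_toReal_smul (by fun_prop)
    (ae_of_all _ fun _ => ENNReal.ofReal_lt_top), ← integral_comp_polarCoord_symm]
  have hpt : ∀ p ∈ polarCoord.target,
      p.1 • ((ENNReal.ofReal ((2 * Real.pi)⁻¹ * Real.exp
        (-((polarCoord.symm p).1 ^ 2 + (polarCoord.symm p).2 ^ 2) / 2))).toReal •
          F (polarCoord.symm p)) =
      (p.1 * Real.exp (-p.1 ^ 2 / 2)) *
        ((2 * Real.pi)⁻¹ * F (Real.cos p.2, Real.sin p.2)) := by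
    rintro ⟨r, φ⟩ hp
    rw [polarCoord_target] at hp
    have hr : 0 < r := hp.1
    rw [ENNReal.toReal_ofReal (by positivity)]
    simp only [polarCoord_symm_apply, smul_eq_mul]
    rw [hF r hr, show (r * Real.cos φ) ^ 2 + (r * Real.sin φ) ^ 2 = r ^ 2 by
      rw [mul_pow, mul_pow, ← mul_add, Real.cos_sq_add_sin_sq, mul_one]]
    ring
  rw [setIntegral_congr_fun polarCoord.open_target.measurableSet hpt, polarCoord_target,
    Measure.volume_eq_prod, setIntegral_prod_mul (fun r : ℝ => r * Real.exp (-r ^ 2 / 2))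
      (fun φ => (2 * Real.pi)⁻¹ * F (Real.cos φ, Real.sin φ)),
    integral_mul_exp_neg_sq_div_two, one_mul, integral_const_mul]

/-- Grothendieck's identity: the mean of `sign⟨x,Z⟩ · sign⟨y,Z⟩` for unit vectors `x`, `y`. -/
lemma integral_sgn_inner_mul_sgn_inner {d : ℕ} (x y : EuclideanSpace ℝ (Fin d))
    (hx : ‖x‖ = 1) (hy : ‖y‖ = 1) :
    ∫ z, sgn (∑ j, x j * z j) * sgn (∑ j, y j * z j)
        ∂(Measure.pi fun _ : Fin d => gaussianReal 0 1) =
      2 / Real.pi * Real.arcsin ⟪x, y⟫ := by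
  have hpi := Real.pi_pos
  set θ := Real.arccos ⟪x, y⟫ with hθ
  have habs : |⟪x, y⟫| ≤ 1 := by simpa [hx, hy] using abs_real_inner_le_norm x y
  have hcos : Real.cos θ = ⟪x, y⟫ := Real.cos_arccos (abs_le.1 habs).1 (abs_le.1 habs).2
  have hsq (w : EuclideanSpace ℝ (Fin d)) (hw : ‖w‖ = 1) : ∑ j, w j ^ 2 = 1 := by
    rw [← EuclideanSpace.real_norm_sq_eq, hw, one_pow]
  -- Replace `(x, y)` by `(1, 0)` and `(cos θ, sin θ)` in the plane.
  have hlaw := map_pair_gaussian_eq (fun j => x j) (fun j => y j) ![1, 0]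
    ![Real.cos θ, Real.sin θ] (by simp [hsq x hx]) (by simp [hsq y hy])
    (by simp [hcos, PiLp.inner_apply, mul_comm])
  have hG : Measurable fun p : ℝ × ℝ => sgn p.1 * sgn p.2 :=
    (measurable_sgn.comp measurable_fst).mul (measurable_sgn.comp measurable_snd)
  have h1 := integral_map (μ := Measure.pi fun _ : Fin d => gaussianReal 0 1)
    (φ := fun z => (∑ j, x j * z j, ∑ j, y j * z j)) (by fun_prop)
    (hG.aestronglyMeasurable)
  have h2 := integral_map (μ := Measure.pi fun _ : Fin 2 => gaussianReal 0 1)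
    (φ := fun z => (∑ j, ![1, 0] j * z j, ∑ j, ![Real.cos θ, Real.sin θ] j * z j)) (by fun_prop)
    (hG.aestronglyMeasurable)
  rw [hlaw] at h1
  rw [← h1, h2]
  have h3 := (measurePreserving_finTwoArrow (gaussianReal 0 1)).integral_comp'
    (fun p : ℝ × ℝ => sgn p.1 * sgn (Real.cos θ * p.1 + Real.sin θ * p.2))
  simp only [Fin.sum_univ_two, Matrix.cons_val_zero, Matrix.cons_val_one, one_mul, zero_mul,
    add_zero]
  simp only [MeasurableEquiv.finTwoArrow_apply] at h3
  rw [h3, integral_prod_gaussian_of_homogeneous]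
  · have hc (φ : ℝ) : Real.cos θ * Real.cos φ + Real.sin θ * Real.sin φ = Real.cos (φ - θ) := by
      rw [Real.cos_sub]; ring
    simp only [hc]
    rw [integral_sgn_cos_mul_sgn_cos (Real.arccos_nonneg _) (Real.arccos_le_pi _), ← hθ,
      Real.arcsin_eq_pi_div_two_sub_arccos, ← hθ]
    field_simp
    ring
  · intro r hr φ
    simp only
    rw [sgn_mul_of_pos hr, show Real.cos θ * (r * Real.cos φ) + Real.sin θ * (r * Real.sin φ) =
      r * (Real.cos θ * Real.cos φ + Real.sin θ * Real.sin φ) by ring, sgn_mul_of_pos hr]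

/-- Hoeffding's inequality for a single pair of unit vectors. -/
lemma measureReal_sign_sum_far_le {d D : ℕ} (hD0 : 0 < D) (x y : EuclideanSpace ℝ (Fin d))
    (hx : ‖x‖ = 1) (hy : ‖y‖ = 1) {δ : ℝ} (hδ : 0 < δ) :
    (Measure.pi fun _ : Fin D => Measure.pi fun _ : Fin d => gaussianReal 0 1).real
        {Z : Fin D → Fin d → ℝ |
          δ < |(D : ℝ)⁻¹ * ∑ i, sgn (∑ j, x j * Z i j) * sgn (∑ j, y j * Z i j) -
              (2 / Real.pi) * Real.arcsin ⟪x, y⟫|} ≤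
      2 * Real.exp (-(D * δ ^ 2 / 2)) := by
  set γ : Measure (Fin d → ℝ) := Measure.pi fun _ : Fin d => gaussianReal 0 1 with hγ
  set μ : Measure (Fin D → Fin d → ℝ) := Measure.pi fun _ : Fin D => γ with hμ
  set m : ℝ := 2 / Real.pi * Real.arcsin ⟪x, y⟫ with hm
  set f : (Fin d → ℝ) → ℝ := fun z => sgn (∑ j, x j * z j) * sgn (∑ j, y j * z j) with hf
  have hfm : Measurable f :=
    (measurable_sgn.comp (by fun_prop)).mul (measurable_sgn.comp (by fun_prop))
  have hmean : ∫ z, f z ∂γ = m := integral_sgn_inner_mul_sgn_inner x y hx hy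
  have hD : (0 : ℝ) < D := Nat.cast_pos.2 hD0
  have hsub : HasSubgaussianMGF (fun z => f z - m) 1 γ := by
    have h := hasSubgaussianMGF_of_mem_Icc (μ := γ) (a := -1) (b := 1) hfm.aemeasurable
      (ae_of_all _ fun z => sgn_mul_sgn_mem_Icc _ _)
    rw [hmean] at h
    convert h using 1
    ext
    norm_num
  have hsubi (i : Fin D) : HasSubgaussianMGF (fun Z : Fin D → Fin d → ℝ => f (Z i) - m) 1 μ := by
    have hmp := measurePreserving_eval (fun _ : Fin D => γ) i
    refine HasSubgaussianMGF.of_map (X := fun z => f z - m) (Y := fun Z : Fin D → Fin d → ℝ => Z i)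
      hmp.measurable.aemeasurable ?_
    change HasSubgaussianMGF _ 1 (Measure.map (Function.eval i) μ)
    rw [hmp.map_eq]
    exact hsub
  have hind : iIndepFun (fun (i : Fin D) (Z : Fin D → Fin d → ℝ) => f (Z i) - m) μ :=
    iIndepFun_pi (X := fun (_ : Fin D) z => f z - m) fun _ => (hfm.sub_const m).aemeasurable
  have hind' : iIndepFun (fun (i : Fin D) (Z : Fin D → Fin d → ℝ) => -(f (Z i) - m)) μ :=
    iIndepFun_pi (X := fun (_ : Fin D) z => -(f z - m)) fun _ =>
      (hfm.sub_const m).neg.aemeasurable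
  have hDδ : 0 ≤ D * δ := by positivity
  have hup := HasSubgaussianMGF.measure_sum_ge_le_of_iIndepFun hind (s := Finset.univ)
    (c := fun _ => 1) (fun i _ => hsubi i) hDδ
  have hlo := HasSubgaussianMGF.measure_sum_ge_le_of_iIndepFun hind' (s := Finset.univ)
    (c := fun _ => 1) (fun i _ => (hsubi i).neg) hDδ
  have hexp : -(D * δ) ^ 2 / (2 * ((∑ _i : Fin D, 1 : NNReal) : ℝ)) = -(D * δ ^ 2 / 2) := by
    simp only [Finset.sum_const, Finset.card_univ, Fintype.card_fin, nsmul_eq_mul, mul_one,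
      NNReal.coe_natCast]
    field_simp
  simp only [hexp] at hup hlo
  refine (measureReal_mono (s₂ := _ ∪ _) ?_).trans ((measureReal_union_le _ _).trans
    ((add_le_add hup hlo).trans_eq (two_mul _).symm))
  intro Z hZ
  have hZ' : δ < |(D : ℝ)⁻¹ * ∑ i, f (Z i) - m| := hZ
  have hsum : ∑ i, (f (Z i) - m) = D * ((D : ℝ)⁻¹ * ∑ i, f (Z i) - m) := by
    rw [Finset.sum_sub_distrib, Finset.sum_const, Finset.card_univ, Fintype.card_fin,
      nsmul_eq_mul]
    field_simp
  rcases lt_abs.1 hZ' with h | h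
  · left
    change D * δ ≤ ∑ i, (f (Z i) - m)
    rw [hsum]
    exact mul_le_mul_of_nonneg_left h.le hD.le
  · right
    change D * δ ≤ ∑ i, -(f (Z i) - m)
    rw [Finset.sum_neg_distrib, hsum, ← mul_neg]
    exact mul_le_mul_of_nonneg_left h.le hD.le

/-- For a set `S` of `n ≥ 2` unit vectors in `ℝ^d`, `δ > 0` and `D ≥ 6 log n / δ²`
independent standard Gaussian vectors `Z₁, …, Z_D` in `ℝ^d`, with probability at least
`1 − 1/n` every pair `x, y ∈ S` satisfies
`|D⁻¹ Σᵢ sign(⟨x,Zᵢ⟩)·sign(⟨y,Zᵢ⟩) − (2/π)·arcsin(⟨x,y⟩)| ≤ δ`. -/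
theorem prob_all_pairs_sign_sum_close (d n D : ℕ) (hd : 1 ≤ d)
    (S : Finset (EuclideanSpace ℝ (Fin d))) (hS : ∀ x ∈ S, ‖x‖ = 1)
    (hcard : S.card = n) (hn : 2 ≤ n) (δ : ℝ) (hδ : 0 < δ) (hD0 : 0 < D)
    (hD : 6 * Real.log n / δ ^ 2 ≤ (D : ℝ)) :
    ENNReal.ofReal (1 - 1 / (n : ℝ)) ≤
      (Measure.pi fun _ : Fin D => Measure.pi fun _ : Fin d => gaussianReal 0 1)
        {Z : Fin D → Fin d → ℝ | ∀ x ∈ S, ∀ y ∈ S,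
          |(D : ℝ)⁻¹ * ∑ i, sgn (∑ j, x j * Z i j) * sgn (∑ j, y j * Z i j) -
              (2 / Real.pi) * Real.arcsin ⟪x, y⟫| ≤ δ} := by
  classical
  set μ := (Measure.pi fun _ : Fin D => Measure.pi fun _ : Fin d => gaussianReal 0 1) with hμ
  set dev : EuclideanSpace ℝ (Fin d) → EuclideanSpace ℝ (Fin d) → (Fin D → Fin d → ℝ) → ℝ :=
    fun x y Z => |(D : ℝ)⁻¹ * ∑ i, sgn (∑ j, x j * Z i j) * sgn (∑ j, y j * Z i j) -
      (2 / Real.pi) * Real.arcsin ⟪x, y⟫| with hdev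
  change _ ≤ μ {Z | ∀ x ∈ S, ∀ y ∈ S, dev x y Z ≤ δ}
  have hn0 : (0 : ℝ) < n := by exact_mod_cast (by omega : 0 < n)
  have hDpos : (0 : ℝ) < D := Nat.cast_pos.2 hD0
  have hsymm (x y : EuclideanSpace ℝ (Fin d)) (Z) : dev x y Z = dev y x Z := by
    simp only [hdev, mul_comm (sgn (∑ j, x j * _)), real_inner_comm]
  have hdiag (x) (hx : x ∈ S) (Z) : dev x x Z = 0 := by
    simp only [hdev, sgn_mul_self, real_inner_self_eq_norm_sq, hS x hx, one_pow, Real.arcsin_one,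
      Finset.sum_const, Finset.card_univ, Fintype.card_fin, nsmul_eq_mul, mul_one]
    rw [inv_mul_cancel₀ hDpos.ne', div_mul_div_cancel₀ Real.pi_pos.ne', div_self two_ne_zero,
      sub_self, abs_zero]
  have hmeas (x y) : Measurable (dev x y) := by
    refine Measurable.abs (Measurable.sub_const (Measurable.const_mul
      (Finset.measurable_sum _ fun i _ => ?_) _) _)
    exact (measurable_sgn.comp (by fun_prop)).mul (measurable_sgn.comp (by fun_prop))
  have htail : 2 * Real.exp (-(D * δ ^ 2 / 2)) ≤ 2 / (n : ℝ) ^ 3 := by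
    have h1 : 6 * Real.log n ≤ D * δ ^ 2 := (div_le_iff₀ (by positivity)).1 hD
    have h2 : Real.exp (-(3 * Real.log n)) = ((n : ℝ) ^ 3)⁻¹ := by
      rw [Real.exp_neg, mul_comm, Real.exp_mul, Real.exp_log hn0]
      norm_cast
    rw [div_eq_mul_inv 2 ((n : ℝ) ^ 3), ← h2]
    gcongr
    linarith
  -- Summing over ordered pairs would lose a factor `2`, giving only about `2 / n`; by symmetry
  -- unordered pairs suffice, and there are `n (n - 1) / 2` of them off the diagonal.
  set E : Finset (Sym2 (EuclideanSpace ℝ (Fin d))) := S.offDiag.image Sym2.mk.uncurry with hE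
  set bad : Sym2 (EuclideanSpace ℝ (Fin d)) → Set (Fin D → Fin d → ℝ) :=
    Sym2.lift ⟨fun x y => {Z | δ < dev x y Z}, fun x y => by simp only [hsymm x y]⟩ with hbad
  have hcompl : {Z | ∀ x ∈ S, ∀ y ∈ S, dev x y Z ≤ δ}ᶜ ⊆ ⋃ e ∈ E, bad e := by
    intro Z hZ
    simp only [Set.mem_compl_iff, Set.mem_ofPred_eq] at hZ
    push Not at hZ
    obtain ⟨x, hx, y, hy, h⟩ := hZ
    have hxy : x ≠ y := by
      rintro rfl
      rw [hdiag x hx] at h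
      exact absurd h hδ.not_gt
    refine Set.mem_biUnion (x := s(x, y)) ?_ h
    exact Finset.mem_coe.2 (Finset.mem_image.2 ⟨(x, y), Finset.mem_offDiag.2 ⟨hx, hy, hxy⟩, rfl⟩)
  have hbadle : ∀ e ∈ E, μ.real (bad e) ≤ 2 / (n : ℝ) ^ 3 := by
    intro e he
    obtain ⟨⟨x, y⟩, hxy, rfl⟩ := Finset.mem_image.1 he
    rw [Finset.mem_offDiag] at hxy
    exact (measureReal_sign_sum_far_le hD0 x y (hS x hxy.1) (hS y hxy.2.1) hδ).trans htail
  have hcardE : (E.card : ℝ) = n * (n - 1) / 2 := by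
    rw [hE, Sym2.card_image_offDiag, hcard, Nat.cast_choose_two]
  have hprob : μ.real {Z | ∀ x ∈ S, ∀ y ∈ S, dev x y Z ≤ δ}ᶜ ≤ 1 / n := by
    calc _ ≤ μ.real (⋃ e ∈ E, bad e) := measureReal_mono hcompl (measure_ne_top _ _)
      _ ≤ ∑ e ∈ E, μ.real (bad e) := measureReal_biUnion_finset_le _ _
      _ ≤ E.card • (2 / (n : ℝ) ^ 3) := Finset.sum_le_card_nsmul _ _ _ hbadle
      _ = (n - 1) / n * (1 / n) := by
        rw [nsmul_eq_mul, hcardE]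
        field_simp
      _ ≤ 1 * (1 / n) := by
        gcongr
        rw [div_le_one hn0]
        linarith
      _ = 1 / n := one_mul _
  have hms : MeasurableSet {Z | ∀ x ∈ S, ∀ y ∈ S, dev x y Z ≤ δ} := by
    simp only [Set.ofPred_forall]
    exact Finset.measurableSet_biInter _ fun x _ => Finset.measurableSet_biInter _ fun y _ =>
      measurableSet_le (hmeas x y) measurable_const
  rw [probReal_compl_eq_one_sub hms] at hprob
  refine ENNReal.ofReal_le_of_le_toReal ?_
  change _ ≤ μ.real _
  linarith
end
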